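/- arXiv:2406.18137 — 2 statements merged into one kernel-verified Lean document; each statement's English description precedes it below -/
import Mathlib

section
/- Let B_{1,r}^P = {θ ∈ ℝ^P : ‖θ‖₁ ≤ r} be the ℓ₁-ball of radius r in ℝ^P with P ≥ 2. Then for every δ > 0, the covering number of B_{1,r}^P with respect to the Euclidean norm satisfies δ · √(log N(δ, B_{1,r}^P, ‖·‖₂)) ≤ 2 r √(2 log P). -/
open Finset

/-- δ-covering number of `Q` with respect to the metric `ρ`: the minimum cardinality of a
subset `C ⊆ Q` such that every `v ∈ Q` is within distance `δ` of some `v' ∈ C`. -/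
noncomputable def coveringNumber {γ : Type*} (δ : ℝ) (Q : Set γ) (ρ : γ → γ → ℝ) : ℕ∞ :=
  sInf {m : ℕ∞ | ∃ C : Set γ, C ⊆ Q ∧ C.encard = m ∧ ∀ v ∈ Q, ∃ v' ∈ C, ρ v v' ≤ δ}

theorem coveringNumber_le_encard {γ : Type*} {δ : ℝ} {Q C : Set γ} {ρ : γ → γ → ℝ}
    (hCQ : C ⊆ Q) (hC : ∀ v ∈ Q, ∃ v' ∈ C, ρ v v' ≤ δ) :
    coveringNumber δ Q ρ ≤ C.encard :=
  sInf_le ⟨C, hCQ, rfl, hC⟩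

/-- The vertices `± r eᵢ` of the ℓ¹-ball of radius `r`. -/
def crossPolytopeVertex {ι : Type*} [DecidableEq ι] (r : ℝ) (v : ι × Bool) : ι → ℝ :=
  Pi.single v.1 (if v.2 then r else -r)

section CrossPolytope

variable {ι : Type*} [Fintype ι] [DecidableEq ι]

theorem sum_mul_crossPolytopeVertex (r : ℝ) (w : ι → ℝ) (v : ι × Bool) :
    ∑ j, w j * crossPolytopeVertex r v j = w v.1 * (if v.2 then r else -r) := by
  simp [crossPolytopeVertex, Pi.single_apply]

theorem sum_abs_crossPolytopeVertex {r : ℝ} (hr : 0 ≤ r) (v : ι × Bool) :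
    ∑ j, |crossPolytopeVertex r v j| = r := by
  obtain ⟨i, b⟩ := v
  rw [Finset.sum_eq_single i]
  · cases b <;> simp [crossPolytopeVertex, abs_of_nonneg hr]
  · intro j _ hj
    simp [crossPolytopeVertex, hj]
  · simp

theorem sum_sq_crossPolytopeVertex (r : ℝ) (v : ι × Bool) :
    ∑ j, crossPolytopeVertex r v j ^ 2 = r ^ 2 := by
  simp_rw [sq (crossPolytopeVertex r v _)]
  rw [sum_mul_crossPolytopeVertex]
  obtain ⟨i, b⟩ := v
  cases b <;> simp [crossPolytopeVertex, sq]

/-- A linear functional on the ℓ¹-ball is minimized at a vertex. -/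
theorem exists_sum_mul_crossPolytopeVertex_le [Nonempty ι] {r : ℝ}
    {θ : ι → ℝ} (hθ : ∑ j, |θ j| ≤ r) (w : ι → ℝ) :
    ∃ v : ι × Bool, ∑ j, w j * crossPolytopeVertex r v j ≤ ∑ j, w j * θ j := by
  obtain ⟨i, hi⟩ := Finite.exists_max fun j => |w j|
  have hlow : -(|w i| * r) ≤ ∑ j, w j * θ j := by
    have h : |∑ j, w j * θ j| ≤ |w i| * r :=
      calc |∑ j, w j * θ j| ≤ ∑ j, |w j * θ j| := Finset.abs_sum_le_sum_abs _ _
        _ ≤ ∑ j, |w i| * |θ j| := by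
          refine Finset.sum_le_sum fun j _ => ?_
          rw [abs_mul]
          exact mul_le_mul_of_nonneg_right (hi j) (abs_nonneg _)
        _ = |w i| * ∑ j, |θ j| := (Finset.mul_sum _ _ _).symm
        _ ≤ |w i| * r := mul_le_mul_of_nonneg_left hθ (abs_nonneg _)
    exact (abs_le.mp h).1
  rcases le_total 0 (w i) with h | h
  · refine ⟨(i, false), ?_⟩
    rw [sum_mul_crossPolytopeVertex]
    simpa [abs_of_nonneg h] using hlow
  · refine ⟨(i, true), ?_⟩
    rw [sum_mul_crossPolytopeVertex]
    simpa [abs_of_nonpos h] using hlow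

/-- Maurey's empirical approximation: a point of the ℓ¹-ball is approximated by averages of `k`
vertices, up to a squared Euclidean error `r² / k`. -/
theorem exists_sum_sq_sum_crossPolytopeVertex_sub_le [Nonempty ι] {r : ℝ}
    {θ : ι → ℝ} (hθ : ∑ j, |θ j| ≤ r) (k : ℕ) :
    ∃ f : Fin k → ι × Bool,
      ∑ j, (∑ i, crossPolytopeVertex r (f i) j - k * θ j) ^ 2 ≤ k * r ^ 2 := by
  induction k with
  | zero => exact ⟨Fin.elim0, by simp⟩
  | succ k ih =>
    obtain ⟨f, hf⟩ := ih
    set s : ι → ℝ := fun j => ∑ i, crossPolytopeVertex r (f i) j - k * θ j with hs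
    obtain ⟨v, hv⟩ := exists_sum_mul_crossPolytopeVertex_le hθ fun j => s j - θ j
    refine ⟨Fin.cons v f, ?_⟩
    have hexp : ∑ j, (∑ i, crossPolytopeVertex r ((Fin.cons v f : Fin (k + 1) → ι × Bool) i) j
          - ((k + 1 : ℕ) : ℝ) * θ j) ^ 2
        = ∑ j, s j ^ 2 + ∑ j, crossPolytopeVertex r v j ^ 2 - ∑ j, θ j ^ 2
          + 2 * (∑ j, (s j - θ j) * crossPolytopeVertex r v j - ∑ j, (s j - θ j) * θ j) := by
      rw [← Finset.sum_add_distrib, ← Finset.sum_sub_distrib, ← Finset.sum_sub_distrib,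
        Finset.mul_sum, ← Finset.sum_add_distrib]
      refine Finset.sum_congr rfl fun j _ => ?_
      simp only [Fin.sum_univ_succ, Fin.cons_zero, Fin.cons_succ, hs]
      push_cast
      ring
    have hθsq : 0 ≤ ∑ j, θ j ^ 2 := Finset.sum_nonneg fun j _ => sq_nonneg _
    rw [hexp, sum_sq_crossPolytopeVertex]
    push_cast
    linarith

/-- If `k ≥ (r / δ)²`, averages of `k` vertices form a `δ`-cover of the ℓ¹-ball. -/
theorem coveringNumber_l1Ball_le_pow [Nonempty ι] {r δ : ℝ} (hr : 0 ≤ r) (hδ : 0 < δ)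
    {k : ℕ} (hk : 0 < k) (hkδ : r ^ 2 ≤ k * δ ^ 2) :
    coveringNumber δ {θ : ι → ℝ | ∑ j, |θ j| ≤ r} (fun u v => √(∑ j, (u j - v j) ^ 2))
      ≤ ((2 * Fintype.card ι) ^ k : ℕ) := by
  have hk' : (0 : ℝ) < k := by exact_mod_cast hk
  let average : (Fin k → ι × Bool) → ι → ℝ :=
    fun f j => (∑ i, crossPolytopeVertex r (f i) j) / k
  refine (coveringNumber_le_encard (C := Set.range average) ?_ ?_).trans ?_
  · rintro _ ⟨f, rfl⟩
    simp only [Set.mem_ofPred_eq, average, abs_div, Nat.abs_cast]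
    rw [← Finset.sum_div, div_le_iff₀ hk']
    calc ∑ j, |∑ i, crossPolytopeVertex r (f i) j|
        ≤ ∑ j, ∑ i, |crossPolytopeVertex r (f i) j| :=
          Finset.sum_le_sum fun j _ => Finset.abs_sum_le_sum_abs _ _
      _ = ∑ i, ∑ j, |crossPolytopeVertex r (f i) j| := Finset.sum_comm
      _ = r * k := by simp [sum_abs_crossPolytopeVertex hr, mul_comm]
  · intro θ hθ
    obtain ⟨f, hf⟩ := exists_sum_sq_sum_crossPolytopeVertex_sub_le hθ k
    refine ⟨average f, ⟨f, rfl⟩, Real.sqrt_le_iff.mpr ⟨hδ.le, ?_⟩⟩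
    have hscale : ∑ j, (θ j - average f j) ^ 2
        = (∑ j, (∑ i, crossPolytopeVertex r (f i) j - k * θ j) ^ 2) / k ^ 2 := by
      rw [Finset.sum_div]
      refine Finset.sum_congr rfl fun j _ => ?_
      simp only [average]
      field_simp
      ring
    rw [hscale, div_le_iff₀ (by positivity)]
    nlinarith
  · rw [← Set.image_univ]
    refine (Set.encard_image_le _ _).trans (le_of_eq ?_)
    rw [Set.encard_univ, ENat.card_eq_coe_fintype_card]
    simp [mul_comm]

end CrossPolytope

theorem coveringNumber_l1Ball_le_one {ι : Type*} [Fintype ι] {r δ : ℝ}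
    (hr : 0 ≤ r) (hrδ : r ≤ δ) :
    coveringNumber δ {θ : ι → ℝ | ∑ j, |θ j| ≤ r} (fun u v => √(∑ j, (u j - v j) ^ 2)) ≤ 1 := by
  rw [← Set.encard_singleton (0 : ι → ℝ)]
  refine coveringNumber_le_encard (by simpa using hr) fun θ hθ => ⟨0, rfl, ?_⟩
  refine Real.sqrt_le_iff.mpr ⟨hr.trans hrδ, ?_⟩
  have hsq : ∑ j, |θ j| ^ 2 ≤ (∑ j, |θ j|) ^ 2 :=
    Finset.sum_sq_le_sq_sum_of_nonneg fun j _ => abs_nonneg _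
  have hθδ : (∑ j, |θ j|) ^ 2 ≤ δ ^ 2 :=
    pow_le_pow_left₀ (Finset.sum_nonneg fun j _ => abs_nonneg _) (le_trans hθ hrδ) 2
  simpa using hsq.trans hθδ

theorem log_two_mul_pow_natCeil_le {P : ℕ} (hP : 2 ≤ P) {x : ℝ} (hx : 1 ≤ x) :
    Real.log (((2 * P) ^ ⌈x⌉₊ : ℕ) : ℝ) ≤ 8 * x * Real.log P := by
  have hP' : (2 : ℝ) ≤ P := by exact_mod_cast hP
  have hlogP : 0 ≤ Real.log P := Real.log_nonneg (by linarith)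
  have hlog : Real.log (2 * P) ≤ 2 * Real.log P := by
    rw [Real.log_mul (by norm_num) (by positivity)]
    linarith [Real.log_le_log two_pos hP']
  have hceil : (⌈x⌉₊ : ℝ) ≤ 2 * x := by linarith [Nat.ceil_lt_add_one (zero_le_one.trans hx)]
  push_cast
  rw [Real.log_pow]
  calc (⌈x⌉₊ : ℝ) * Real.log (2 * P) ≤ (2 * x) * (2 * Real.log P) := by
        gcongr
        exact Real.log_nonneg (by linarith)
    _ ≤ 8 * x * Real.log P := by nlinarith [mul_nonneg (zero_le_one.trans hx) hlogP]

/-- Sudakov bound for the ℓ¹-ball: for the ℓ¹-ball of radius `r` in `ℝ^P`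
with `P ≥ 2`, the Euclidean covering number is finite and satisfies
`δ √(log N(δ, B¹_r, ‖·‖₂)) ≤ 2 r √(2 log P)` for every `δ > 0`. -/
theorem l1_ball_covering_number_bound
    (P : ℕ) (hP : 2 ≤ P) (r : ℝ) (hr : 0 < r) (δ : ℝ) (hδ : 0 < δ) :
    coveringNumber δ {θ : Fin P → ℝ | ∑ j, |θ j| ≤ r}
        (fun u v => Real.sqrt (∑ j, (u j - v j) ^ 2)) ≠ ⊤ ∧
    δ * Real.sqrt (Real.log
        ((coveringNumber δ {θ : Fin P → ℝ | ∑ j, |θ j| ≤ r}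
          (fun u v => Real.sqrt (∑ j, (u j - v j) ^ 2))).toNat)) ≤
      2 * r * Real.sqrt (2 * Real.log P) := by
  set N := coveringNumber δ {θ : Fin P → ℝ | ∑ j, |θ j| ≤ r}
    (fun u v => Real.sqrt (∑ j, (u j - v j) ^ 2))
  have hlogP : 0 ≤ Real.log P := Real.log_natCast_nonneg P
  obtain ⟨n, hn, hlogn⟩ : ∃ n : ℕ, N ≤ n ∧ Real.log n ≤ 8 * (r / δ) ^ 2 * Real.log P := by
    rcases le_total r δ with h | h
    · exact ⟨1, by simpa using coveringNumber_l1Ball_le_one hr.le h, by simp; positivity⟩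
    · have hx : 1 ≤ (r / δ) ^ 2 := one_le_pow₀ ((one_le_div hδ).mpr h)
      have : Nonempty (Fin P) := ⟨⟨0, by omega⟩⟩
      refine ⟨(2 * P) ^ ⌈(r / δ) ^ 2⌉₊, ?_, log_two_mul_pow_natCeil_le hP hx⟩
      have hk : r ^ 2 ≤ ⌈(r / δ) ^ 2⌉₊ * δ ^ 2 := by
        rw [← div_le_iff₀ (by positivity), ← div_pow]
        exact Nat.le_ceil _
      have hcover := coveringNumber_l1Ball_le_pow (ι := Fin P) hr.le hδ
        (Nat.ceil_pos.mpr (by positivity)) hk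
      rwa [Fintype.card_fin] at hcover
  have hNtop : N ≠ ⊤ := ne_top_of_le_ne_top (ENat.natCast_ne_top n) hn
  refine ⟨hNtop, ?_⟩
  have hlogN : Real.log N.toNat ≤ 8 * (r / δ) ^ 2 * Real.log P := by
    rcases Nat.eq_zero_or_pos N.toNat with h | h
    · rw [h]
      simp only [Nat.cast_zero, Real.log_zero]
      positivity
    · refine (Real.log_le_log (by exact_mod_cast h) ?_).trans hlogn
      exact_mod_cast ENat.toNat_le_of_le_natCast hn
  calc δ * √(Real.log N.toNat)
      ≤ δ * √((2 * r / δ) ^ 2 * (2 * Real.log P)) := by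
        gcongr
        exact hlogN.trans_eq (by ring)
    _ = 2 * r * √(2 * Real.log P) := by
        rw [Real.sqrt_mul (sq_nonneg _), Real.sqrt_sq (by positivity)]
        field_simp
end

section
/- Let f_Θ(x) = θ_L σ(θ_{L−1} ⋯ σ(θ₁ x)⋯) be an L-layer network with softplus activation σ(t) = log(1 + e^t) − log 2, and parameters satisfying ‖Θ‖₁ = ∑_{l=1}^L ‖θ_l‖_{1,1} ≤ r. Then for every input x, the ℓ₁-norm of the gradient of f_Θ with respect to the input satisfies ‖∇_x f_Θ(x)‖₁ ≤ (r/L)^L. -/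
open MeasureTheory Finset ProbabilityTheory

/-- Entrywise ℓ¹ ("(1,1)") norm of a weight matrix. -/
noncomputable def matL11 {m k : ℕ} (A : Fin m → Fin k → ℝ) : ℝ :=
  ∑ i, ∑ j, |A i j|

/-- Hidden-layer activations: `hiddenLayer σ dims θ x l = h_l`, with `h_0 = x` and
`h_{l+1} = σ(θ_{l+1} h_l)` (entrywise activation). -/
noncomputable def hiddenLayer (σ : ℝ → ℝ) (dims : ℕ → ℕ)
    (θ : ∀ l, Fin (dims (l + 1)) → Fin (dims l) → ℝ)
    (x : Fin (dims 0) → ℝ) : (l : ℕ) → Fin (dims l) → ℝ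
  | 0 => x
  | l + 1 => fun i => σ (∑ j, θ l i j * hiddenLayer σ dims θ x l j)

/-- Scalar output of the `L`-layer network `f_Θ(x) = θ_L σ(θ_{L-1} ⋯ σ(θ_1 x) ⋯)`
(summed over the single output coordinate, since `dims L = 1`). -/
noncomputable def netOutput (σ : ℝ → ℝ) (L : ℕ) (dims : ℕ → ℕ)
    (θ : ∀ l, Fin (dims (l + 1)) → Fin (dims l) → ℝ)
    (x : Fin (dims 0) → ℝ) : ℝ :=
  ∑ i, ∑ j, θ (L - 1) i j * hiddenLayer σ dims θ x (L - 1) j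

/-- ℓ¹-norm of the whole parameter set: `‖Θ‖₁ = ∑_{l=1}^L ‖θ_l‖_{1,1}`. -/
noncomputable def paramsL1 (L : ℕ) (dims : ℕ → ℕ)
    (θ : ∀ l, Fin (dims (l + 1)) → Fin (dims l) → ℝ) : ℝ :=
  ∑ l ∈ Finset.range L, matL11 (θ l)

/-- The sparse hypothesis class `F_r = {f_Θ : ‖Θ‖₁ ≤ r}`. -/
def sparseClass (σ : ℝ → ℝ) (L : ℕ) (dims : ℕ → ℕ) (r : ℝ) :
    Set ((Fin (dims 0) → ℝ) → ℝ) :=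
  {f | ∃ θ : ∀ l, Fin (dims (l + 1)) → Fin (dims l) → ℝ,
        paramsL1 L dims θ ≤ r ∧ f = netOutput σ L dims θ}

/-- Gradient of `f` with respect to the input: `(∇_x f)_i = ∂f/∂x^i`. -/
noncomputable def gradIn {d : ℕ} (f : (Fin d → ℝ) → ℝ) (x : Fin d → ℝ) : Fin d → ℝ :=
  fun i => fderiv ℝ f x (Pi.single i 1)

/-- Laplacian (divergence of the input gradient) of `f`. -/
noncomputable def lapIn {d : ℕ} (f : (Fin d → ℝ) → ℝ) (x : Fin d → ℝ) : ℝ :=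
  ∑ i, fderiv ℝ (fun y => gradIn f y i) x (Pi.single i 1)

/-- Shifted softplus activation `σ(t) = log(1+e^t) - log 2`. -/
noncomputable def softplus (t : ℝ) : ℝ := Real.log (1 + Real.exp t) - Real.log 2

lemma hasDerivAt_softplus (t : ℝ) :
    HasDerivAt softplus (Real.exp t / (1 + Real.exp t)) t := by
  have hpos : 1 + Real.exp t ≠ 0 := by positivity
  exact (((Real.hasDerivAt_exp t).const_add 1).log hpos).sub_const _

lemma abs_deriv_softplus_le_one (t : ℝ) : |deriv softplus t| ≤ 1 := by
  rw [(hasDerivAt_softplus t).deriv, abs_of_nonneg (by positivity), div_le_one (by positivity)]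
  linarith

lemma matL11_nonneg {m k : ℕ} (A : Fin m → Fin k → ℝ) : 0 ≤ matL11 A :=
  sum_nonneg fun _ _ => sum_nonneg fun _ _ => abs_nonneg _

lemma sum_abs_row_le_matL11 {m k : ℕ} (A : Fin m → Fin k → ℝ) (i : Fin m) :
    ∑ j, |A i j| ≤ matL11 A :=
  single_le_sum (f := fun i => ∑ j, |A i j|)
    (fun _ _ => sum_nonneg fun _ _ => abs_nonneg _) (mem_univ i)

/-- The input gradient of a linear combination. -/
lemma gradIn_sum_mul {d : ℕ} {ι : Type*} (s : Finset ι) (a : ι → ℝ)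
    (g : ι → (Fin d → ℝ) → ℝ) (x : Fin d → ℝ) (hg : ∀ j ∈ s, DifferentiableAt ℝ (g j) x)
    (i : Fin d) :
    gradIn (fun y => ∑ j ∈ s, a j * g j y) x i = ∑ j ∈ s, a j * gradIn (g j) x i := by
  have h := HasFDerivAt.fun_sum (u := s) (fun j hj => (hg j hj).hasFDerivAt.const_mul (a j))
  simp [gradIn, h.fderiv]

/-- The `ℓ¹` norm of the input gradient of a linear combination is at most the `ℓ¹` norm of
the coefficients times a common bound for the individual gradients. -/
lemma sum_abs_gradIn_sum_mul_le {d : ℕ} {ι : Type*} (s : Finset ι) (a : ι → ℝ)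
    (g : ι → (Fin d → ℝ) → ℝ) (x : Fin d → ℝ) (hg : ∀ j ∈ s, DifferentiableAt ℝ (g j) x)
    {P : ℝ} (hP : ∀ j ∈ s, ∑ i, |gradIn (g j) x i| ≤ P) :
    ∑ i, |gradIn (fun y => ∑ j ∈ s, a j * g j y) x i| ≤ (∑ j ∈ s, |a j|) * P := by
  calc ∑ i, |gradIn (fun y => ∑ j ∈ s, a j * g j y) x i|
      ≤ ∑ i, ∑ j ∈ s, |a j| * |gradIn (g j) x i| := by
        refine sum_le_sum fun i _ => ?_
        rw [gradIn_sum_mul s a g x hg]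
        simpa only [abs_mul] using abs_sum_le_sum_abs (fun j => a j * gradIn (g j) x i) s
    _ = ∑ j ∈ s, |a j| * ∑ i, |gradIn (g j) x i| := by
        rw [sum_comm]
        simp only [mul_sum]
    _ ≤ (∑ j ∈ s, |a j|) * P := by
        rw [sum_mul]
        exact sum_le_sum fun j hj => mul_le_mul_of_nonneg_left (hP j hj) (abs_nonneg _)

/-- Composing with softplus does not increase the `ℓ¹` norm of the input gradient. -/
lemma sum_abs_gradIn_softplus_comp_le {d : ℕ} {g : (Fin d → ℝ) → ℝ} {x : Fin d → ℝ}
    (hg : DifferentiableAt ℝ g x) :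
    ∑ i, |gradIn (fun y => softplus (g y)) x i| ≤ ∑ i, |gradIn g x i| := by
  refine sum_le_sum fun i _ => ?_
  have h := (hasDerivAt_softplus (g x)).differentiableAt.hasDerivAt.comp_hasFDerivAt x
    hg.hasFDerivAt
  have hgrad : gradIn (fun y => softplus (g y)) x i
      = deriv softplus (g x) * gradIn g x i := by
    change fderiv ℝ (softplus ∘ g) x (Pi.single i 1) = _
    rw [h.fderiv]
    simp [gradIn]
  rw [hgrad, abs_mul]
  exact mul_le_of_le_one_left (abs_nonneg _) (abs_deriv_softplus_le_one _)

lemma differentiable_hiddenLayer_softplus (dims : ℕ → ℕ)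
    (θ : ∀ l, Fin (dims (l + 1)) → Fin (dims l) → ℝ) (l : ℕ) (j : Fin (dims l)) :
    Differentiable ℝ (fun y => hiddenLayer softplus dims θ y l j) := by
  induction l with
  | zero => exact differentiable_apply j
  | succ l ih =>
    have hσ : Differentiable ℝ softplus := fun t => (hasDerivAt_softplus t).differentiableAt
    exact hσ.comp (Differentiable.fun_sum fun k _ => (ih k).const_mul (θ l j k))

/-- The input gradient of each hidden unit is bounded by the product of the norms of the
preceding weight matrices. -/
lemma sum_abs_gradIn_hiddenLayer_le (dims : ℕ → ℕ)
    (θ : ∀ l, Fin (dims (l + 1)) → Fin (dims l) → ℝ) (x : Fin (dims 0) → ℝ) (l : ℕ)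
    (j : Fin (dims l)) :
    ∑ i, |gradIn (fun y => hiddenLayer softplus dims θ y l j) x i|
      ≤ ∏ k ∈ range l, matL11 (θ k) := by
  induction l with
  | zero =>
    have h : fderiv ℝ (fun y : Fin (dims 0) → ℝ => y j) x = ContinuousLinearMap.proj j :=
      (hasFDerivAt_apply j x).fderiv
    simp [hiddenLayer, gradIn, h, Pi.single_apply, apply_ite abs]
  | succ l ih =>
    have hdiff := differentiable_hiddenLayer_softplus dims θ l
    calc ∑ i, |gradIn (fun y => hiddenLayer softplus dims θ y (l + 1) j) x i|
        ≤ ∑ i, |gradIn (fun y => ∑ k, θ l j k * hiddenLayer softplus dims θ y l k) x i| :=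
          sum_abs_gradIn_softplus_comp_le
            (DifferentiableAt.fun_sum fun k _ => (hdiff k x).const_mul (θ l j k))
      _ ≤ (∑ k, |θ l j k|) * ∏ k ∈ range l, matL11 (θ k) :=
          sum_abs_gradIn_sum_mul_le _ _ _ _ (fun k _ => hdiff k x) fun k _ => ih k
      _ ≤ ∏ k ∈ range (l + 1), matL11 (θ k) := by
          rw [prod_range_succ, mul_comm]
          exact mul_le_mul_of_nonneg_left (sum_abs_row_le_matL11 _ _)
            (prod_nonneg fun k _ => matL11_nonneg _)

/-- The inequality of arithmetic and geometric means, in product form. -/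
lemma prod_range_le_sum_div_pow (n : ℕ) (hn : 1 ≤ n) (a : ℕ → ℝ) (ha : ∀ k, 0 ≤ a k) :
    ∏ k ∈ range n, a k ≤ ((∑ k ∈ range n, a k) / n) ^ n := by
  have h := Real.geom_mean_le_arith_mean (range n) (fun _ => 1) a (fun _ _ => zero_le_one)
    (by simpa [Nat.pos_iff_ne_zero, Nat.one_le_iff_ne_zero] using hn) (fun k _ => ha k)
  simp only [Real.rpow_one, sum_const, card_range, nsmul_eq_mul, mul_one, one_mul] at h
  have hprod : 0 ≤ ∏ k ∈ range n, a k := prod_nonneg fun k _ => ha k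
  calc ∏ k ∈ range n, a k = ((∏ k ∈ range n, a k) ^ (n : ℝ)⁻¹) ^ n :=
        (Real.rpow_inv_natCast_pow hprod (by omega)).symm
    _ ≤ _ := pow_le_pow_left₀ (Real.rpow_nonneg hprod _) h n

/-- bounded norm of partial derivatives: for an `L`-layer network with
shifted softplus activation and parameters of total ℓ¹-norm at most `r`, the ℓ¹-norm of the
input gradient satisfies `‖∇_x f_Θ(x)‖₁ ≤ (r/L)^L` for every input `x`. -/
theorem input_gradient_l1_bound
    (L : ℕ) (hL : 1 ≤ L) (dims : ℕ → ℕ) (hdL : dims L = 1)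
    (r : ℝ)
    (θ : ∀ l, Fin (dims (l + 1)) → Fin (dims l) → ℝ)
    (hθ : paramsL1 L dims θ ≤ r)
    (x : Fin (dims 0) → ℝ) :
    ∑ i, |gradIn (netOutput softplus L dims θ) x i| ≤ (r / (L : ℝ)) ^ L := by
  obtain ⟨n, rfl⟩ : ∃ n, L = n + 1 := ⟨L - 1, by omega⟩
  have hgrad : ∑ i, |gradIn (netOutput softplus (n + 1) dims θ) x i|
      ≤ ∏ k ∈ range (n + 1), matL11 (θ k) := by
    have hnet : netOutput softplus (n + 1) dims θ = fun y =>
        ∑ p : Fin (dims (n + 1)) × Fin (dims n),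
          θ n p.1 p.2 * hiddenLayer softplus dims θ y n p.2 := by
      funext y
      rw [Fintype.sum_prod_type]
      rfl
    have hcoef : matL11 (θ n) = ∑ p : Fin (dims (n + 1)) × Fin (dims n), |θ n p.1 p.2| := by
      rw [Fintype.sum_prod_type]
      rfl
    rw [hnet, prod_range_succ, mul_comm, hcoef]
    exact sum_abs_gradIn_sum_mul_le univ
      (fun p : Fin (dims (n + 1)) × Fin (dims n) => θ n p.1 p.2)
      (fun p y => hiddenLayer softplus dims θ y n p.2) x
      (fun p _ => differentiable_hiddenLayer_softplus dims θ n p.2 x)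
      (fun p _ => sum_abs_gradIn_hiddenLayer_le dims θ x n p.2)
  have hsum : 0 ≤ ∑ k ∈ range (n + 1), matL11 (θ k) := sum_nonneg fun k _ => matL11_nonneg _
  refine (hgrad.trans (prod_range_le_sum_div_pow _ hL _ fun k => matL11_nonneg _)).trans ?_
  exact pow_le_pow_left₀ (by positivity) (div_le_div_of_nonneg_right hθ (by positivity)) _
end
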